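/- There exists a constant C > 0 depending only on K such that for all n ≥ 2, all h₂ ∈ (0,1) and every index 1 ≤ i ≤ n, | b̄_i − (1 − (i/n)²)/2 | ≤ C·(h₂ + 1/n). -/

import Mathlib

open Finset MeasureTheory

/-- The cumulative distribution function `K̄(x) = ∫_{-∞}^x K(t) dt` of the kernel `K`. -/
noncomputable def kbar (K : ℝ → ℝ) (x : ℝ) : ℝ := ∫ t in Set.Iic x, K t

/-- `B_{ij} = ∫₀¹ K̄((v - i/n)/h₂) K̄((v - j/n)/h₂) dv` (indices `1 ≤ i, j ≤ n`). -/
noncomputable def BCoef (K : ℝ → ℝ) (n : ℕ) (h₂ : ℝ) (i j : ℕ) : ℝ :=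
  ∫ v in (0:ℝ)..1, kbar K ((v - i / n) / h₂) * kbar K ((v - j / n) / h₂)

/-- `b̄_i = (1/(n-1)) ∑_{k ≠ i} B_{ik}`. -/
noncomputable def bbar (K : ℝ → ℝ) (n : ℕ) (h₂ : ℝ) (i : ℕ) : ℝ :=
  (1 / ((n : ℝ) - 1)) * ∑ k ∈ Finset.Icc 1 n, if k ≠ i then BCoef K n h₂ i k else 0

theorem kbar_nonneg {K : ℝ → ℝ} (hKnonneg : ∀ x, 0 ≤ K x) (x : ℝ) : 0 ≤ kbar K x :=
  integral_nonneg hKnonneg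

theorem kbar_monotone {K : ℝ → ℝ} (hKi : Integrable K) (hKnonneg : ∀ x, 0 ≤ K x) :
    Monotone (kbar K) := fun _ _ hxy =>
  setIntegral_mono_set hKi.integrableOn (ae_of_all _ hKnonneg)
    (Set.Iic_subset_Iic.2 hxy).eventuallyLE

theorem kbar_le_one {K : ℝ → ℝ} (hKi : Integrable K) (hKnonneg : ∀ x, 0 ≤ K x)
    (hKint : ∫ x, K x = 1) (x : ℝ) : kbar K x ≤ 1 :=
  hKint ▸ setIntegral_le_integral hKi (ae_of_all _ hKnonneg)

theorem kbar_eq_zero {K : ℝ → ℝ} (hKsupp : ∀ x, x ∉ Set.Icc (-1 : ℝ) 1 → K x = 0)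
    {x : ℝ} (hx : x < -1) : kbar K x = 0 :=
  setIntegral_eq_zero_of_forall_eq_zero fun t ht =>
    hKsupp t fun h => by linarith [h.1, Set.mem_Iic.1 ht]

theorem kbar_eq_one {K : ℝ → ℝ} (hKint : ∫ x, K x = 1)
    (hKsupp : ∀ x, x ∉ Set.Icc (-1 : ℝ) 1 → K x = 0) {x : ℝ} (hx : 1 ≤ x) :
    kbar K x = 1 := by
  rw [← hKint]
  refine setIntegral_eq_integral_of_forall_compl_eq_zero fun t ht => hKsupp t fun h => ?_
  exact ht (Set.mem_Iic.2 (h.2.trans hx))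

/-- A monotone `[0, 1]`-valued function that jumps from `0` to `1` within distance `h` of `m`
has integral over `[0, 1]` within `h` of `1 - m`. -/
theorem abs_integral_sub_one_sub_le {f : ℝ → ℝ} {m h : ℝ} (hf : Monotone f)
    (hf0 : ∀ v, 0 ≤ f v) (hf1 : ∀ v, f v ≤ 1) (hm0 : 0 ≤ m) (hm1 : m ≤ 1) (hh : 0 ≤ h)
    (hleft : ∀ v < m - h, f v = 0) (hright : ∀ v, m + h ≤ v → f v = 1) :
    |(∫ v in (0 : ℝ)..1, f v) - (1 - m)| ≤ h := by
  have hint (a b : ℝ) : IntervalIntegrable f volume a b := hf.intervalIntegrable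
  rw [abs_le]
  constructor
  · have hd0 : 0 ≤ min (m + h) 1 := le_min (by linarith) zero_le_one
    have hd1 : min (m + h) 1 ≤ 1 := min_le_right _ _
    have h1 : 0 ≤ ∫ v in (0 : ℝ)..min (m + h) 1, f v :=
      intervalIntegral.integral_nonneg hd0 fun v _ => hf0 v
    have h2 : ∫ v in min (m + h) 1..1, f v = ∫ _ in min (m + h) 1..1, (1 : ℝ) := by
      refine intervalIntegral.integral_congr_ae (ae_of_all _ fun v hv => ?_)
      rw [Set.uIoc_of_le hd1] at hv
      rcases min_lt_iff.1 hv.1 with h' | h'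
      · exact hright v h'.le
      · exact absurd hv.2 h'.not_ge
    have h3 := intervalIntegral.integral_add_adjacent_intervals
      (hint 0 (min (m + h) 1)) (hint (min (m + h) 1) 1)
    simp only [intervalIntegral.integral_const, smul_eq_mul, mul_one] at h2
    linarith [min_le_left (m + h) 1]
  · have hc0 : 0 ≤ max (m - h) 0 := le_max_right _ _
    have hc1 : max (m - h) 0 ≤ 1 := max_le (by linarith) zero_le_one
    have h1 : ∫ v in max (m - h) 0..1, f v ≤ ∫ _ in max (m - h) 0..1, (1 : ℝ) :=
      intervalIntegral.integral_mono hc1 (hint _ _) intervalIntegrable_const hf1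
    have h2 : ∫ v in (0 : ℝ)..max (m - h) 0, f v = ∫ _ in (0 : ℝ)..max (m - h) 0, (0 : ℝ) := by
      refine intervalIntegral.integral_congr_Ioo_of_le hc0 fun v hv => ?_
      rcases lt_max_iff.1 hv.2 with h' | h'
      · exact hleft v h'
      · exact absurd hv.1 h'.not_gt
    have h3 := intervalIntegral.integral_add_adjacent_intervals
      (hint 0 (max (m - h) 0)) (hint (max (m - h) 0) 1)
    simp only [intervalIntegral.integral_const, smul_eq_mul, mul_one, mul_zero] at h1 h2
    linarith [le_max_left (m - h) 0]

theorem abs_BCoef_sub_le {K : ℝ → ℝ} (hKnonneg : ∀ x, 0 ≤ K x) (hKint : ∫ x, K x = 1)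
    (hKsupp : ∀ x, x ∉ Set.Icc (-1 : ℝ) 1 → K x = 0) {n : ℕ} {h : ℝ} (hh : 0 < h) {i j : ℕ}
    (hi : i ≤ n) (hj : j ≤ n) :
    |BCoef K n h i j - (1 - max (i : ℝ) j / n)| ≤ h := by
  have hKi : Integrable K := by
    by_contra hK
    simp [integral_undef hK] at hKint
  have hmono (a : ℝ) : Monotone fun v => kbar K ((v - a) / h) := fun v w hvw =>
    kbar_monotone hKi hKnonneg (by gcongr)
  have hzero {a v : ℝ} (hv : v < a - h) : kbar K ((v - a) / h) = 0 :=
    kbar_eq_zero hKsupp (by rw [div_lt_iff₀ hh]; linarith)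
  have hone {a v : ℝ} (hv : a + h ≤ v) : kbar K ((v - a) / h) = 1 :=
    kbar_eq_one hKint hKsupp (by rw [le_div_iff₀ hh]; linarith)
  have hn : (0 : ℝ) ≤ n := n.cast_nonneg
  have hmax : max (i : ℝ) j / n = max ((i : ℝ) / n) (j / n) := (max_div_div_right hn _ _).symm
  refine abs_integral_sub_one_sub_le (fun v w hvw => ?_) (fun v => ?_) (fun v => ?_)
    (by positivity) (div_le_one_of_le₀ (by simp [hi, hj]) hn) hh.le (fun v hv => ?_)
    (fun v hv => ?_)
  · exact mul_le_mul (hmono _ hvw) (hmono _ hvw) (kbar_nonneg hKnonneg _)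
      (kbar_nonneg hKnonneg _)
  · exact mul_nonneg (kbar_nonneg hKnonneg _) (kbar_nonneg hKnonneg _)
  · exact mul_le_one₀ (kbar_le_one hKi hKnonneg hKint _) (kbar_nonneg hKnonneg _)
      (kbar_le_one hKi hKnonneg hKint _)
  · rw [hmax, lt_sub_iff_add_lt, lt_max_iff] at hv
    rcases hv with hv | hv
    · rw [hzero (lt_sub_iff_add_lt.2 hv), zero_mul]
    · rw [hzero (lt_sub_iff_add_lt.2 hv), mul_zero]
  · rw [hmax, ← le_sub_iff_add_le, max_le_iff] at hv
    rw [hone (le_sub_iff_add_le.1 hv.1), hone (le_sub_iff_add_le.1 hv.2), mul_one]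

theorem sum_Icc_max {n i : ℕ} (hi : i ≤ n) :
    ∑ k ∈ Finset.Icc 1 n, max (i : ℝ) k = i ^ 2 + (n * (n + 1) - i * (i + 1)) / 2 := by
  induction n, hi using Nat.le_induction with
  | base =>
    have h : ∀ k ∈ Finset.Icc 1 i, max (i : ℝ) k = i := fun k hk =>
      max_eq_left (by exact_mod_cast (Finset.mem_Icc.1 hk).2)
    rw [Finset.sum_congr rfl h]
    simp [sq]
  | succ n hn ih =>
    have h : (i : ℝ) ≤ (n + 1 : ℕ) := by exact_mod_cast hn.trans n.le_succ
    rw [Finset.sum_Icc_succ_top (by lia), ih, max_eq_right h]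
    push_cast
    ring

theorem sum_erase_one_sub_max_div {n i : ℕ} (hi1 : 1 ≤ i) (hi : i ≤ n) :
    ∑ k ∈ (Finset.Icc 1 n).erase i, (1 - max (i : ℝ) k / n) =
      ((n : ℝ) - 1) / 2 - i * (i - 1) / (2 * n) - (1 - i / n) := by
  have hn : (n : ℝ) ≠ 0 := by
    have : n ≠ 0 := by lia
    exact_mod_cast this
  rw [Finset.sum_erase_eq_sub (Finset.mem_Icc.2 ⟨hi1, hi⟩), Finset.sum_sub_distrib,
    ← Finset.sum_div, sum_Icc_max hi]
  simp only [Finset.sum_const, Nat.card_Icc, add_tsub_cancel_right, nsmul_eq_mul, mul_one,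
    max_self]
  field_simp
  ring

theorem abs_mean_one_sub_max_div_sub_le {n i : ℕ} (hn : 2 ≤ n) (hi1 : 1 ≤ i) (hi : i ≤ n) :
    |1 / ((n : ℝ) - 1) * ∑ k ∈ (Finset.Icc 1 n).erase i, (1 - max (i : ℝ) k / n) -
      (1 - ((i : ℝ) / n) ^ 2) / 2| ≤ 2 * (1 / (n : ℝ)) := by
  have hn' : (2 : ℝ) ≤ n := by exact_mod_cast hn
  have hi1' : (1 : ℝ) ≤ i := by exact_mod_cast hi1
  have hi' : (i : ℝ) ≤ n := by exact_mod_cast hi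
  have hn1 : (n : ℝ) - 1 ≠ 0 := by linarith
  have hn1' : (0 : ℝ) < n - 1 := by linarith
  have hn0 : (0 : ℝ) < n := by linarith
  have key : 1 / ((n : ℝ) - 1) * (((n : ℝ) - 1) / 2 - i * (i - 1) / (2 * n) - (1 - i / n)) -
      (1 - ((i : ℝ) / n) ^ 2) / 2 = -((n - i) * (2 * n - i)) / (2 * n ^ 2 * (n - 1)) := by
    field_simp
    ring
  rw [sum_erase_one_sub_max_div hi1 hi, key, neg_div, abs_neg, abs_of_nonneg
    (div_nonneg (mul_nonneg (by linarith) (by linarith)) (by positivity)),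
    div_le_iff₀ (by positivity)]
  have : 2 * (1 / (n : ℝ)) * (2 * n ^ 2 * (n - 1)) = (n - 1) * (4 * n) := by
    field_simp
    ring
  rw [this]
  exact mul_le_mul (by linarith) (by linarith) (by linarith) hn1'.le

/-- `|b̄_i - (1 - (i/n)²)/2| ≤ C (h₂ + 1/n)` uniformly in `1 ≤ i ≤ n`,
for a constant `C` depending only on the kernel `K`. -/
theorem stmt10 (K : ℝ → ℝ)
    (hKcont : Continuous K) (hKsymm : ∀ x, K (-x) = K x)
    (hKnonneg : ∀ x, 0 ≤ K x) (hKint : ∫ x, K x = 1)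
    (hKsupp : ∀ x, x ∉ Set.Icc (-1 : ℝ) 1 → K x = 0) :
    ∃ C > 0, ∀ n : ℕ, 2 ≤ n → ∀ h₂ ∈ Set.Ioo (0 : ℝ) 1, ∀ i : ℕ, 1 ≤ i → i ≤ n →
      |bbar K n h₂ i - (1 - ((i : ℝ) / n) ^ 2) / 2| ≤ C * (h₂ + 1 / n) := by
  refine ⟨2, two_pos, fun n hn h₂ hh i hi1 hi => ?_⟩
  have hn' : (2 : ℝ) ≤ n := by exact_mod_cast hn
  have hn1 : (0 : ℝ) < n - 1 := by linarith
  have hbbar : bbar K n h₂ i =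
      1 / ((n : ℝ) - 1) * ∑ k ∈ (Finset.Icc 1 n).erase i, BCoef K n h₂ i k := by
    rw [bbar, ← Finset.sum_filter, Finset.filter_ne']
  have hcard : (((Finset.Icc 1 n).erase i).card : ℝ) = n - 1 := by
    rw [Finset.card_erase_of_mem (Finset.mem_Icc.2 ⟨hi1, hi⟩), Nat.card_Icc,
      Nat.add_sub_cancel, Nat.cast_pred (by lia)]
  have herr : |1 / ((n : ℝ) - 1) * ∑ k ∈ (Finset.Icc 1 n).erase i, BCoef K n h₂ i k -
      1 / ((n : ℝ) - 1) * ∑ k ∈ (Finset.Icc 1 n).erase i, (1 - max (i : ℝ) k / n)| ≤ h₂ := by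
    rw [← mul_sub, ← Finset.sum_sub_distrib, abs_mul, abs_of_pos (one_div_pos.2 hn1),
      one_div_mul_eq_div, div_le_iff₀ hn1, ← hcard, mul_comm, ← nsmul_eq_mul]
    refine (Finset.abs_sum_le_sum_abs _ _).trans (Finset.sum_le_card_nsmul _ _ _ fun k hk => ?_)
    exact abs_BCoef_sub_le hKnonneg hKint hKsupp hh.1 hi
      (Finset.mem_Icc.1 (Finset.mem_of_mem_erase hk)).2
  rw [hbbar]
  refine (abs_sub_le _ _ _).trans
    ((add_le_add herr (abs_mean_one_sub_max_div_sub_le hn hi1 hi)).trans ?_)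
  linarith [hh.1]
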